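/- Let R be a Noetherian local ring and M a nonzero finitely generated R-module with qid_R M < ∞. Then dim M = depth R − grade(M,R). -/

import Mathlib

/-!
The equality `dim M = depth R - grade M` is obtained by dimension shifting with two contravariant
δ-functors: `Ext^n(-, R)`, and `T^n(A) = H_{c-n}(Hom(A, I))` for a bounded quasi-injective
resolution `I` of `M` that vanishes in degrees `≥ c`. No localization of `I` and no passage to a
quotient ring is needed.

The common mechanism is Nakayama's lemma. If `x` is regular on `A`, then `T^n(A) / x T^n(A)` embeds
into `T^{n+1}(A / x A)`, so a prime containing `x` in the support of `T^n(A)` lies in that of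
`T^{n+1}(A / x A)`. Along a regular sequence the degree increases by its length, and with prime
filtrations it also increases by one for each strict step in a chain of primes.

Let `h` be the top degree with `T^h(R) ≠ 0`; then `T^h(R)` is a direct sum of copies of `M`. Let `s`
be the top degree in which `T` is nonzero on finitely generated modules; it is attained at the
residue field.

* `depth R = s - h`. A regular sequence of length `n` shifts the maximal ideal from the support of
  `T^h(R)` to degree `h + n ≤ s`. Conversely, as long as `T` vanishes on `A` in degree `s` and `A` is
  nonzero, the residue field does not embed into `A`, so the maximal ideal contains an `A`-regular
  element; starting from `R` this produces a regular sequence of length `s - h`.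
* `grade M + dim M ≤ s - h`. By Rees's theorem `ann M` contains an `R`-regular sequence of length
  `grade M`; shifting along it and then along a chain of primes in the support of `M` stays in
  degrees at most `s`.
* `depth R ≤ grade M + dim M`. From `Ext^g(M, R) ≠ 0`, a prime filtration and a chain in the support
  of `M` of length `d` lead to `Ext^{g+d}(R/m, R) ≠ 0`, and `depth R` is at most the degree of any
  nonzero `Ext(R/m, R)`.

The first two items are `DeltaFunctor.exists_depth_eq`, the last one is
`exists_ltSeries_of_nontrivial_extMod`.
-/

open CategoryTheory CategoryTheory.Limits Opposite

noncomputable section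

variable (R : Type) [CommRing R]

/-- The `i`-th Ext module of two `R`-modules. -/
def extMod (M N : Type) [AddCommGroup M] [Module R M] [AddCommGroup N] [Module R N]
    (i : ℕ) : ModuleCat R :=
  ((Ext R (ModuleCat.{0} R) i).obj (op (ModuleCat.of R M))).obj (ModuleCat.of R N)

/-- The `i`-th Tor module of two `R`-modules. -/
def torMod (M N : Type) [AddCommGroup M] [Module R M] [AddCommGroup N] [Module R N]
    (i : ℕ) : ModuleCat R :=
  ((Tor (ModuleCat.{0} R) i).obj (ModuleCat.of R M)).obj (ModuleCat.of R N)

/-- `grade(M,N) = inf { i | Ext^i(M,N) ≠ 0 }`, as an extended natural number. -/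
def extGrade (M N : Type) [AddCommGroup M] [Module R M] [AddCommGroup N] [Module R N] : ℕ∞ :=
  sInf {c : ℕ∞ | ∃ i : ℕ, c = i ∧ Nontrivial (extMod R M N i)}

/-- `P_R(M,N) = sup { i | Ext^i(M,N) ≠ 0 }`, as an extended natural number. -/
def extSup (M N : Type) [AddCommGroup M] [Module R M] [AddCommGroup N] [Module R N] : ℕ∞ :=
  sSup {c : ℕ∞ | ∃ i : ℕ, c = i ∧ Nontrivial (extMod R M N i)}

/-- `depth(I, N)`: the supremum of lengths of `N`-regular sequences contained in `I`. -/
def idealDepth (I : Ideal R) (N : Type) [AddCommGroup N] [Module R N] : ℕ∞ :=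
  ⨆ rs : {l : List R // (∀ r ∈ l, r ∈ I) ∧ RingTheory.Sequence.IsRegular N l},
    (rs.1.length : ℕ∞)

/-- The depth of a module over a local ring. -/
def moduleDepth [IsLocalRing R] (N : Type) [AddCommGroup N] [Module R N] : ℕ∞ :=
  idealDepth R (IsLocalRing.maximalIdeal R) N

/-- The Krull dimension of a module: the sup of lengths of chains of primes in its support. -/
def moduleDim (M : Type) [AddCommGroup M] [Module R M] : ℕ∞ :=
  ⨆ c : LTSeries (Module.support R M), (c.length : ℕ∞)

/-- A quasi-projective resolution: a bounded-below complex of projectives whose homologies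
are finite direct sums of copies of `M`, not all zero. -/
def IsQuasiProjRes (P : ChainComplex (ModuleCat.{0} R) ℤ)
    (M : Type) [AddCommGroup M] [Module R M] : Prop :=
  (∀ i, Projective (P.X i)) ∧
  (∃ n : ℤ, ∀ i < n, IsZero (P.X i)) ∧
  (∃ a : ℤ → ℕ, (∃ i, 0 < a i) ∧
    ∀ i, Nonempty ((P.homology i) ≅ ModuleCat.of R (Fin (a i) → M)))

/-- Quasi-projective dimension: `inf { sup P - hsup P }` over bounded quasi-projective
resolutions `P` of `M`.  The condition `sup P - hsup P ≤ n` is encoded as the existence of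
a degree `h` with nonzero homology such that `P` vanishes in degrees `> h + n`. -/
def qpd (M : Type) [AddCommGroup M] [Module R M] : ℕ∞ :=
  sInf {c : ℕ∞ | ∃ n : ℕ, c = n ∧ ∃ P : ChainComplex (ModuleCat.{0} R) ℤ,
    IsQuasiProjRes R P M ∧
    ∃ h : ℤ, ¬ IsZero (P.homology h) ∧ ∀ i, h + n < i → IsZero (P.X i)}

/-- A quasi-injective resolution: a bounded-above complex of injectives whose homologies
are finite direct sums of copies of `M`, not all zero. -/
def IsQuasiInjRes (I : ChainComplex (ModuleCat.{0} R) ℤ)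
    (M : Type) [AddCommGroup M] [Module R M] : Prop :=
  (∀ i, Injective (I.X i)) ∧
  (∃ n : ℤ, ∀ i > n, IsZero (I.X i)) ∧
  (∃ b : ℤ → ℕ, (∃ i, 0 < b i) ∧
    ∀ i, Nonempty ((I.homology i) ≅ ModuleCat.of R (Fin (b i) → M)))

/-- Quasi-injective dimension: `inf { hinf I - inf I }` over bounded quasi-injective
resolutions `I` of `M`. -/
def qid (M : Type) [AddCommGroup M] [Module R M] : ℕ∞ :=
  sInf {c : ℕ∞ | ∃ n : ℕ, c = n ∧ ∃ I : ChainComplex (ModuleCat.{0} R) ℤ,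
    IsQuasiInjRes R I M ∧
    ∃ h : ℤ, ¬ IsZero (I.homology h) ∧ ∀ i, i < h - n → IsZero (I.X i)}

/-- Projective dimension, via finite projective resolutions. -/
def projDim (M : Type) [AddCommGroup M] [Module R M] : ℕ∞ :=
  sInf {c : ℕ∞ | ∃ n : ℕ, c = n ∧ ∃ P : ChainComplex (ModuleCat.{0} R) ℤ,
    (∀ i, Projective (P.X i)) ∧ (∀ i : ℤ, (i < 0 ∨ (n : ℤ) < i) → IsZero (P.X i)) ∧
    Nonempty ((P.homology 0) ≅ ModuleCat.of R M) ∧ ∀ i ≠ 0, IsZero (P.homology i)}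

/-- Injective dimension, via finite injective resolutions (in degrees `-n, …, 0`). -/
def injDim (M : Type) [AddCommGroup M] [Module R M] : ℕ∞ :=
  sInf {c : ℕ∞ | ∃ n : ℕ, c = n ∧ ∃ I : ChainComplex (ModuleCat.{0} R) ℤ,
    (∀ i, Injective (I.X i)) ∧ (∀ i : ℤ, (0 < i ∨ i < -(n : ℤ)) → IsZero (I.X i)) ∧
    Nonempty ((I.homology 0) ≅ ModuleCat.of R M) ∧ ∀ i ≠ 0, IsZero (I.homology i)}

/-- The depth of the localization `N_p` over the local ring `R_p`. -/
def localDepth (p : PrimeSpectrum R) (N : Type) [AddCommGroup N] [Module R N] : ℕ∞ :=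
  idealDepth (Localization.AtPrime p.asIdeal)
    (IsLocalRing.maximalIdeal (Localization.AtPrime p.asIdeal))
    (LocalizedModule p.asIdeal.primeCompl N)

end

/-! ### Dimension shifting for δ-functors -/

open scoped Pointwise

/-- The part of a contravariant `R`-linear δ-functor from `R`-modules to `R`-modules, with degrees
in `ℕ`, that dimension shifting uses: action on morphisms, `R`-linearity at identities only, and
the long exact sequence, with the connecting map provided existentially. Neither functoriality nor
naturality of the connecting map is recorded. -/
structure DeltaFunctor (R : Type) [CommRing R] where
  obj : ℕ → ModuleCat.{0} R → ModuleCat.{0} R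
  map : ∀ (n : ℕ) {A B : ModuleCat.{0} R}, (A ⟶ B) → (obj n B →ₗ[R] obj n A)
  map_smul_id : ∀ (n : ℕ) (A : ModuleCat.{0} R) (r : R), map n (r • 𝟙 A) = r • LinearMap.id
  exact_mid : ∀ (n : ℕ) {S : ShortComplex (ModuleCat.{0} R)}, S.ShortExact →
    Function.Exact (map n S.g) (map n S.f)
  exact_delta : ∀ (n : ℕ) {S : ShortComplex (ModuleCat.{0} R)}, S.ShortExact →
    ∃ δ : obj n S.X₁ →ₗ[R] obj (n + 1) S.X₃,
      Function.Exact (map n S.f) δ ∧ Function.Exact δ (map (n + 1) S.g)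

namespace DeltaFunctor

lemma support_subset_of_exact {R : Type} [CommRing R] {A B C : Type} [AddCommGroup A] [Module R A]
    [AddCommGroup B] [Module R B] [AddCommGroup C] [Module R C] (f : A →ₗ[R] B) (g : B →ₗ[R] C)
    (h : Function.Exact f g) :
    Module.support R B ⊆ Module.support R A ∪ Module.support R C := by
  have h1 : Function.Exact (LinearMap.range f).subtype (LinearMap.rangeRestrict g) := by
    intro x
    rw [← Subtype.val_inj]
    simpa using h x
  rw [Module.support_of_exact h1 (Submodule.injective_subtype _) g.surjective_rangeRestrict]
  exact Set.union_subset_union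
    (Module.support_subset_of_surjective _ f.surjective_rangeRestrict)
    (Module.support_subset_of_injective _ (Submodule.injective_subtype _))

variable {R : Type} [CommRing R] (T : DeltaFunctor R)

lemma smul_eq_zero (n : ℕ) (A : ModuleCat.{0} R) {r : R} (hr : r ∈ Module.annihilator R A)
    (y : T.obj n A) : r • y = 0 := by
  have h : r • 𝟙 A = (0 : R) • 𝟙 A := by
    ext a
    change r • a = (0 : R) • a
    rw [Module.mem_annihilator.mp hr a, zero_smul]
  have := congrArg (T.map n) h
  rw [T.map_smul_id, T.map_smul_id] at this
  have h2 : r • y = (0 : R) • y := congrArg (fun f => f y) this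
  rw [h2, zero_smul]

lemma subsingleton_obj (n : ℕ) (A : ModuleCat.{0} R) [Subsingleton A] :
    Subsingleton (T.obj n A) := by
  refine ⟨fun x y => ?_⟩
  have (z : T.obj n A) : z = 0 := by
    rw [← one_smul R z]
    exact T.smul_eq_zero n A (Module.mem_annihilator.mpr fun a => Subsingleton.elim _ _) z
  rw [this x, this y]

lemma annihilator_le (n : ℕ) (A : ModuleCat.{0} R) {q : PrimeSpectrum R}
    (hq : q ∈ Module.support R (T.obj n A)) : Module.annihilator R A ≤ q.asIdeal :=
  le_trans (fun _ hr => Module.mem_annihilator.mpr fun y => T.smul_eq_zero n A hr y)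
    (Module.annihilator_le_of_mem_support hq)

lemma shortExact_of_exact {A B C : Type} [AddCommGroup A] [Module R A]
    [AddCommGroup B] [Module R B] [AddCommGroup C] [Module R C] (f : A →ₗ[R] B) (g : B →ₗ[R] C)
    (hf : Function.Injective f) (hg : Function.Surjective g) (h : Function.Exact f g) :
    (ModuleCat.shortComplexOfCompEqZero f g h.linearMap_comp_eq_zero).ShortExact where
  exact := ModuleCat.shortComplex_exact _ h
  mono_f := by simpa [ModuleCat.shortComplexOfCompEqZero, ModuleCat.mono_iff_injective] using hf
  epi_g := by simpa [ModuleCat.shortComplexOfCompEqZero, ModuleCat.epi_iff_surjective] using hg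

lemma exact_mid' (n : ℕ) {A B C : Type} [AddCommGroup A] [Module R A]
    [AddCommGroup B] [Module R B] [AddCommGroup C] [Module R C] (f : A →ₗ[R] B) (g : B →ₗ[R] C)
    (hf : Function.Injective f) (hg : Function.Surjective g) (h : Function.Exact f g) :
    ∃ (u : T.obj n (.of R C) →ₗ[R] T.obj n (.of R B))
      (v : T.obj n (.of R B) →ₗ[R] T.obj n (.of R A)), Function.Exact u v :=
  ⟨_, _, T.exact_mid n (shortExact_of_exact f g hf hg h)⟩

lemma exact_delta' (n : ℕ) {A B C : Type} [AddCommGroup A] [Module R A]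
    [AddCommGroup B] [Module R B] [AddCommGroup C] [Module R C] (f : A →ₗ[R] B) (g : B →ₗ[R] C)
    (hf : Function.Injective f) (hg : Function.Surjective g) (h : Function.Exact f g) :
    ∃ (δ : T.obj n (.of R A) →ₗ[R] T.obj (n + 1) (.of R C))
      (v : T.obj (n + 1) (.of R C) →ₗ[R] T.obj (n + 1) (.of R B)), Function.Exact δ v := by
  obtain ⟨δ, -, h2⟩ := T.exact_delta n (shortExact_of_exact f g hf hg h)
  exact ⟨δ, _, h2⟩

/-- The segment `T n A → T n A → T (n + 1) (A / x A) → T (n + 1) A` of the long exact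
sequence of `0 → A → A → A / x A → 0`, where the first maps are multiplication by `x`. -/
lemma exact_smul (n : ℕ) {A : Type} [AddCommGroup A] [Module R A] {x : R}
    (hreg : IsSMulRegular A x) :
    ∃ (δ : T.obj n (.of R A) →ₗ[R] T.obj (n + 1) (.of R (QuotSMulTop x A)))
      (v : T.obj (n + 1) (.of R (QuotSMulTop x A)) →ₗ[R] T.obj (n + 1) (.of R A)),
      (∀ y, δ y = 0 ↔ ∃ z, x • z = y) ∧ Function.Exact δ v := by
  have hex : Function.Exact (x • (LinearMap.id : A →ₗ[R] A))
      ((x • (⊤ : Submodule R A)).mkQ) := by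
    intro y
    rw [Submodule.mkQ_apply, Submodule.Quotient.mk_eq_zero,
      Submodule.mem_smul_pointwise_iff_exists]
    simp
  obtain ⟨δ, h1, h2⟩ := T.exact_delta n (shortExact_of_exact _ _ (fun a b hab => hreg hab)
    (Submodule.mkQ_surjective _) hex)
  have h3 : ∀ z, T.map n (A := .of R A) (B := .of R A)
      (ModuleCat.ofHom (x • (LinearMap.id : A →ₗ[R] A))) z = x • z := fun z =>
    congrArg (fun f => f z) (T.map_smul_id n (ModuleCat.of R A) x)
  refine ⟨δ, _, fun y => (h1 y).trans ⟨?_, ?_⟩, h2⟩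
  · rintro ⟨z, hz⟩
    exact ⟨z, (h3 z).symm.trans hz⟩
  · rintro ⟨z, hz⟩
    exact ⟨z, (h3 z).trans hz⟩

/-- Nakayama step: since `T n A / x (T n A)` embeds into `T (n + 1) (A / x A)`, a prime containing the
`A`-regular element `x` stays in the support when passing from `A` in degree `n` to `A / x A` in
degree `n + 1`. -/
lemma mem_support_quotSMulTop {n : ℕ} {A : Type} [AddCommGroup A] [Module R A]
    [Module.Finite R (T.obj n (.of R A))] {q : PrimeSpectrum R}
    (hq : q ∈ Module.support R (T.obj n (.of R A))) {x : R} (hx : x ∈ q.asIdeal)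
    (hreg : IsSMulRegular A x) :
    q ∈ Module.support R (T.obj (n + 1) (.of R (QuotSMulTop x A))) := by
  obtain ⟨δ, -, h1, -⟩ := T.exact_smul n hreg
  have hker : LinearMap.ker δ = x • (⊤ : Submodule R (T.obj n (.of R A))) := by
    ext y
    rw [LinearMap.mem_ker, h1 y, Submodule.mem_smul_pointwise_iff_exists]
    simp
  have h3 : q ∈ Module.support R (QuotSMulTop x (T.obj n (.of R A))) := by
    rw [Module.support_quotSMulTop]
    exact ⟨hq, by simpa using hx⟩
  refine Module.support_subset_of_injective
    (Submodule.liftQ _ δ hker.symm.le) ?_ h3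
  rw [← LinearMap.ker_eq_bot, Submodule.ker_liftQ_eq_bot _ _ _ hker.le]

/-- Dévissage along a prime filtration of `A`. The cyclic module `R ⧸ P` is replaced by an isomorphic
`N` as the induction principle for prime filtrations supplies it in that form. -/
lemma exists_prime_of_mem_support [IsNoetherianRing R] (n : ℕ) (A : Type) [AddCommGroup A]
    [Module R A] [hA : Module.Finite R A] {q : PrimeSpectrum R}
    (hq : q ∈ Module.support R (T.obj n (.of R A))) :
    ∃ P ∈ Module.support R A, ∃ (N : Type) (_ : AddCommGroup N) (_ : Module R N),
      Nonempty (N ≃ₗ[R] R ⧸ P.asIdeal) ∧ q ∈ Module.support R (T.obj n (.of R N)) := by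
  induction hA using IsNoetherianRing.induction_on_isQuotientEquivQuotientPrime R with
  | subsingleton N =>
    have : Subsingleton (ModuleCat.of R N) := ‹Subsingleton N›
    have := T.subsingleton_obj n (.of R N)
    simp [Module.support_eq_empty] at hq
  | quotient N P e =>
    refine ⟨P, ?_, N, _, _, ⟨e⟩, hq⟩
    rw [e.support_eq, Module.support_eq_zeroLocus, Ideal.annihilator_quotient]
    simp
  | exact N₁ N₂ N₃ f g hf hg h h₁ h₃ =>
    obtain ⟨u, v, huv⟩ := T.exact_mid' n f g hf hg h
    rw [Module.support_of_exact h hf hg]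
    rcases support_subset_of_exact u v huv hq with hq | hq
    · obtain ⟨P, hP, N, i1, i2, h⟩ := h₃ hq
      exact ⟨P, Or.inr hP, N, i1, i2, h⟩
    · obtain ⟨P, hP, N, i1, i2, h⟩ := h₁ hq
      exact ⟨P, Or.inl hP, N, i1, i2, h⟩

/-- Finite generation of all `T n A` follows from that of the `T n R` when `T 0 = 0`: reduce to
`A = R ⧸ P` by dévissage and shift the degree along `0 → P → R → R ⧸ P → 0`. -/
lemma finite_of_ring [IsNoetherianRing R] (h0 : ∀ A, Subsingleton (T.obj 0 A))
    (hR : ∀ n, Module.Finite R (T.obj n (.of R R))) (n : ℕ) (A : Type) [AddCommGroup A]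
    [Module R A] [hA : Module.Finite R A] : Module.Finite R (T.obj n (.of R A)) := by
  induction n generalizing A with
  | zero =>
    have := h0 (.of R A)
    infer_instance
  | succ n ih =>
    induction hA using IsNoetherianRing.induction_on_isQuotientEquivQuotientPrime R with
    | subsingleton N =>
      have : Subsingleton (ModuleCat.of R N) := ‹Subsingleton N›
      have := T.subsingleton_obj (n + 1) (.of R N)
      infer_instance
    | quotient N P e =>
      have hex : Function.Exact (Submodule.subtype P.asIdeal)
          (e.symm.toLinearMap ∘ₗ Submodule.mkQ P.asIdeal) := by
        intro y
        simp [Ideal.Quotient.eq_zero_iff_mem]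
      obtain ⟨u, v, huv⟩ := T.exact_delta' n (Submodule.subtype P.asIdeal)
        (e.symm.toLinearMap ∘ₗ Submodule.mkQ P.asIdeal) (Submodule.injective_subtype _)
        (e.symm.surjective.comp (Submodule.mkQ_surjective _)) hex
      have := ih P.asIdeal
      have := hR (n + 1)
      have := isNoetherian_of_range_eq_ker u v (LinearMap.exact_iff.mp huv).symm
      infer_instance
    | exact N₁ N₂ N₃ f g hf hg h h₁ h₃ =>
      obtain ⟨u, v, huv⟩ := T.exact_mid' (n + 1) f g hf hg h
      have := isNoetherian_of_range_eq_ker u v (LinearMap.exact_iff.mp huv).symm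
      infer_instance


/-- `T` takes finitely generated modules to finitely generated modules in every degree. -/
def IsFinite : Prop :=
  ∀ (n : ℕ) (A : Type) [AddCommGroup A] [Module R A] [Module.Finite R A],
    Module.Finite R (T.obj n (.of R A))

variable {T}

lemma exists_mem_support_of_isRegular (hT : T.IsFinite) {q : PrimeSpectrum R} (rs : List R)
    (hrs : ∀ r ∈ rs, r ∈ q.asIdeal) (n : ℕ) (A : Type) [AddCommGroup A] [Module R A]
    [Module.Finite R A] (hreg : RingTheory.Sequence.IsRegular A rs)
    (hq : q ∈ Module.support R (T.obj n (.of R A))) :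
    ∃ (N : Type) (_ : AddCommGroup N) (_ : Module R N), Module.Finite R N ∧
      q ∈ Module.support R (T.obj (n + rs.length) (.of R N)) := by
  induction rs generalizing n A with
  | nil => exact ⟨A, _, _, ‹_›, hq⟩
  | cons r rs ih =>
    rw [RingTheory.Sequence.isRegular_cons_iff] at hreg
    have := hT n A
    obtain ⟨N, i1, i2, h1, h2⟩ := ih (fun r hr => hrs r (List.mem_cons_of_mem _ hr)) (n + 1)
      (QuotSMulTop r A) hreg.2
      (T.mem_support_quotSMulTop hq (hrs r List.mem_cons_self) hreg.1)
    refine ⟨N, i1, i2, h1, ?_⟩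
    rwa [List.length_cons, add_comm rs.length, ← add_assoc]

/-- For a prime `P` strictly inside `q'`, an element `x` of `q'` outside `P` is regular on `R ⧸ P`,
so `q'` is in the support of the next degree at `R ⧸ (P + (x))`. -/
lemma exists_succ_of_quotient_prime (hT : T.IsFinite) {n : ℕ} {N : Type}
    [AddCommGroup N] [Module R N] {P q q' : PrimeSpectrum R} (e : N ≃ₗ[R] R ⧸ P.asIdeal)
    (hq : q ∈ Module.support R (T.obj n (.of R N))) (hqq' : q ≤ q') (hP : P < q') :
    ∃ (x : R), x ∉ P.asIdeal ∧ q' ∈ Module.support R (T.obj (n + 1) (.of R (QuotSMulTop x N))) := by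
  obtain ⟨x, hx, hxP⟩ := SetLike.exists_of_lt (show P.asIdeal < q'.asIdeal from hP)
  have : Module.Finite R N := Module.Finite.equiv e.symm
  have := hT n N
  refine ⟨x, hxP, T.mem_support_quotSMulTop (Module.mem_support_mono hqq' hq) hx ?_⟩
  intro a b hab
  apply e.injective
  have h : x • e a = x • e b := by rw [← map_smul, ← map_smul]; exact congrArg e hab
  rw [Algebra.smul_def, Algebra.smul_def] at h
  exact mul_left_cancel₀
    (by simpa [Ideal.Quotient.eq_zero_iff_mem] using hxP) h

/-- A strict step up in a chain of primes costs one degree: the analogue of the inequality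
`μ_{i+1}(q') ≠ 0` that holds for Bass numbers if `q < q'` are primes with `μ_i(q) ≠ 0`. -/
lemma exists_mem_support_succ [IsNoetherianRing R] (hT : T.IsFinite) {n : ℕ} {A : Type}
    [AddCommGroup A] [Module R A] [Module.Finite R A] {q q' : PrimeSpectrum R} (hlt : q < q')
    (hq : q ∈ Module.support R (T.obj n (.of R A))) :
    ∃ (N : Type) (_ : AddCommGroup N) (_ : Module R N), Module.Finite R N ∧
      q' ∈ Module.support R (T.obj (n + 1) (.of R N)) := by
  obtain ⟨P, -, N, _, _, ⟨e⟩, hN⟩ := T.exists_prime_of_mem_support n A hq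
  have : Module.Finite R N := Module.Finite.equiv e.symm
  have hPq : P ≤ q := by
    have := T.annihilator_le n _ hN
    rwa [show Module.annihilator R (ModuleCat.of R N) = P.asIdeal by
      rw [LinearEquiv.annihilator_eq (M := ModuleCat.of R N) e, Ideal.annihilator_quotient]] at this
  obtain ⟨x, -, hx⟩ := exists_succ_of_quotient_prime hT e hN hlt.le (hPq.trans_lt hlt)
  exact ⟨_, _, _, inferInstance, hx⟩

lemma exists_mem_support_of_chain [IsNoetherianRing R] (hT : T.IsFinite) {n : ℕ} {A : Type}
    [AddCommGroup A] [Module R A] [Module.Finite R A] {X : Set (PrimeSpectrum R)}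
    (c : LTSeries X) (hq : (c.head : PrimeSpectrum R) ∈ Module.support R (T.obj n (.of R A))) :
    ∃ (N : Type) (_ : AddCommGroup N) (_ : Module R N), Module.Finite R N ∧
      (c.last : PrimeSpectrum R) ∈ Module.support R (T.obj (n + c.length) (.of R N)) := by
  have key : ∀ i (hi : i < c.length + 1),
      ∃ (N : Type) (_ : AddCommGroup N) (_ : Module R N), Module.Finite R N ∧
      (c ⟨i, hi⟩ : PrimeSpectrum R) ∈ Module.support R (T.obj (n + i) (.of R N)) := by
    intro i
    induction i with
    | zero => exact fun hi => ⟨A, _, _, ‹_›, hq⟩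
    | succ i ih =>
      intro hi
      obtain ⟨N, _, _, _, h⟩ := ih (by omega)
      exact exists_mem_support_succ hT (c.strictMono (by simp)) h
  exact key c.length (by omega)

section Local

variable [IsNoetherianRing R] [IsLocalRing R]

/-- Climbing from `P` to the maximal ideal along a chain of primes, with one degree per step, until
`T` is nonzero on the residue field. The chain lies in the support of `M`. -/
lemma exists_ltSeries_residue (hT : T.IsFinite) (M : Type) [AddCommGroup M] [Module R M]
    (P : PrimeSpectrum R) (hP : P ∈ Module.support R M) (i : ℕ) (N : Type)
    [AddCommGroup N] [Module R N] (e : N ≃ₗ[R] R ⧸ P.asIdeal)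
    (hN : Nontrivial (T.obj i (.of R N))) :
    ∃ c : LTSeries (Module.support R M), c.head = ⟨P, hP⟩ ∧
      ∃ (K : Type) (_ : AddCommGroup K) (_ : Module R K),
        Nonempty (K ≃ₗ[R] R ⧸ IsLocalRing.maximalIdeal R) ∧
        Nontrivial (T.obj (i + c.length) (.of R K)) := by
  have : WellFoundedGT (PrimeSpectrum R) :=
    StrictMono.wellFoundedGT (f := fun P : PrimeSpectrum R => P.asIdeal) fun _ _ h => h
  induction P using WellFoundedGT.induction generalizing i N with
  | ind P ih =>
    have : Module.Finite R N := Module.Finite.equiv e.symm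
    by_cases hPm : P = IsLocalRing.closedPoint R
    · subst hPm
      exact ⟨RelSeries.singleton _ ⟨_, hP⟩, rfl, N, _, _, ⟨e⟩, hN⟩
    · have hlt : P < IsLocalRing.closedPoint R :=
        lt_of_le_of_ne (IsLocalRing.le_maximalIdeal P.2.ne_top) hPm
      have := hT i N
      obtain ⟨x, hxP, hx⟩ := exists_succ_of_quotient_prime hT e
        (IsLocalRing.closedPoint_mem_support R (T.obj i (.of R N))) le_rfl hlt
      obtain ⟨P', hP', N', _, _, ⟨e'⟩, hN'⟩ := T.exists_prime_of_mem_support (i + 1) _ hx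
      have hPP' : P < P' := by
        have h1 : P ≤ P' := by
          rw [Module.support_quotSMulTop, e.support_eq, Module.support_eq_zeroLocus,
            Ideal.annihilator_quotient] at hP'
          exact hP'.1
        refine lt_of_le_of_ne h1 ?_
        rintro rfl
        rw [Module.support_quotSMulTop] at hP'
        exact hxP (by simpa using hP'.2)
      obtain ⟨c, hc, K, i1, i2, eK, hK⟩ := ih P' hPP' (Module.mem_support_mono hPP'.le hP) (i + 1)
        N' e' (Module.nonempty_support_iff.mp ⟨_, hN'⟩)
      refine ⟨c.cons ⟨P, hP⟩ (by rw [hc]; exact hPP'), by simp, K, i1, i2, eK, ?_⟩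
      have : i + (c.cons ⟨P, hP⟩ (by rw [hc]; exact hPP')).length = i + 1 + c.length := by
        simp; omega
      rwa [this]

/-- Let `s` be the top degree in which `T` is nonzero on finitely generated modules, attained at the
residue field `K`. If `T j A = 0` for `j > e`, then `A` has depth at least `s - e`. Indeed for `e < s`
an embedding of `K` into `A` would give a surjection from `T s A = 0` onto `T s K`; hence the maximal
ideal contains an `A`-regular element `x`, and `T j (A / x A) = 0` for `j > e + 1`. -/
lemma exists_isRegular_of_vanishing {s : ℕ} {K : Type} [AddCommGroup K] [Module R K]
    (eK : K ≃ₗ[R] R ⧸ IsLocalRing.maximalIdeal R)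
    (hK : Nontrivial (T.obj s (.of R K)))
    (hs : ∀ j, s < j → ∀ (A : Type) [AddCommGroup A] [Module R A] [Module.Finite R A],
      Subsingleton (T.obj j (.of R A)))
    (e : ℕ) (A : Type) [AddCommGroup A] [Module R A] [Module.Finite R A] [Nontrivial A]
    (he : ∀ j, e < j → Subsingleton (T.obj j (.of R A))) :
    ∃ rs : List R, (∀ r ∈ rs, r ∈ IsLocalRing.maximalIdeal R) ∧
      RingTheory.Sequence.IsRegular A rs ∧ s ≤ e + rs.length := by
  induction hd : s - e generalizing e A with
  | zero => exact ⟨[], by simp, by simp [RingTheory.Sequence.isRegular_iff], by omega⟩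
  | succ d ih =>
    have : Module.Finite R K := Module.Finite.equiv eK.symm
    have hsimple : IsSimpleModule R K := by
      have : IsSimpleModule R (R ⧸ IsLocalRing.maximalIdeal R) :=
        isSimpleModule_iff_isCoatom.mpr (IsLocalRing.maximalIdeal.isMaximal R).out
      exact IsSimpleModule.congr eK
    have hsub : Subsingleton (K →ₗ[R] A) := by
      refine ⟨fun f g => ?_⟩
      suffices h : ∀ f : K →ₗ[R] A, f = 0 by rw [h f, h g]
      intro f
      refine (LinearMap.injective_or_eq_zero f).resolve_left fun hf => ?_
      obtain ⟨δ, h1, -⟩ := T.exact_delta s (shortExact_of_exact f (LinearMap.range f).mkQ hf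
        (Submodule.mkQ_surjective _) (LinearMap.exact_map_mkQ_range f))
      have h2 : Subsingleton (T.obj (s + 1) (.of R (A ⧸ LinearMap.range f))) := hs _ (by omega) _
      have h3 := he s (by omega)
      refine not_subsingleton (T.obj s (.of R K)) ⟨fun y z => ?_⟩
      have h4 : ∀ y : T.obj s (.of R K), y = 0 := by
        intro y
        obtain ⟨w, hw⟩ := (h1 y).mp (@Subsingleton.elim _ h2 _ _)
        rw [← hw, @Subsingleton.elim _ h3 w 0, map_zero]
      rw [h4 y, h4 z]
    obtain ⟨x, hx, hreg⟩ := IsSMulRegular.subsingleton_linearMap_iff.mp hsub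
    rw [eK.annihilator_eq, Ideal.annihilator_quotient] at hx
    have : Nontrivial (QuotSMulTop x A) := by
      rw [← Module.nonempty_support_iff (R := R), Module.support_quotSMulTop]
      exact ⟨_, IsLocalRing.closedPoint_mem_support R A, Set.singleton_subset_iff.mpr hx⟩
    obtain ⟨rs, h1, h2, h3⟩ := ih (e + 1) (QuotSMulTop x A) (fun j hj => by
      obtain ⟨j, rfl⟩ : ∃ j', j = j' + 1 := ⟨j - 1, by omega⟩
      obtain ⟨δ, v, -, h⟩ := T.exact_smul j hreg
      have h2 : Subsingleton (T.obj (j + 1) (.of R A)) := he _ (by omega)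
      have h3 : Subsingleton (T.obj j (.of R A)) := he _ (by omega)
      have h4 : ∀ y : T.obj (j + 1) (.of R (QuotSMulTop x A)), y = 0 := by
        intro y
        obtain ⟨w, hw⟩ := (h y).mp (@Subsingleton.elim _ h2 _ _)
        rw [← hw, @Subsingleton.elim _ h3 w 0, map_zero]
      exact ⟨fun y z => by rw [h4 y, h4 z]⟩) (by omega)
    refine ⟨x :: rs, List.forall_mem_cons.mpr ⟨hx, h1⟩, ?_, by simp; omega⟩
    rw [RingTheory.Sequence.isRegular_cons_iff]
    exact ⟨hreg, h2⟩

/-- The top degree in which `T` is nonzero on finitely generated modules is attained at the residue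
field, since otherwise climbing to the maximal ideal would raise the degree. -/
lemma exists_top (hT : T.IsFinite) (B : ℕ)
    (hB : ∀ j, B < j → ∀ (A : Type) [AddCommGroup A] [Module R A] [Module.Finite R A],
      Subsingleton (T.obj j (.of R A)))
    {h : ℕ} (hh : Nontrivial (T.obj h (.of R R))) :
    ∃ (s : ℕ) (K : Type) (_ : AddCommGroup K) (_ : Module R K),
      Nonempty (K ≃ₗ[R] R ⧸ IsLocalRing.maximalIdeal R) ∧ Nontrivial (T.obj s (.of R K)) ∧
      ∀ j, s < j → ∀ (A : Type) [AddCommGroup A] [Module R A] [Module.Finite R A],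
        Subsingleton (T.obj j (.of R A)) := by
  let S : Set ℕ := {j | ∃ (A : Type) (_ : AddCommGroup A) (_ : Module R A) (_ : Module.Finite R A),
    Nontrivial (T.obj j (.of R A))}
  have hS : BddAbove S := by
    refine ⟨B, fun j ⟨A, _, _, _, hA⟩ => ?_⟩
    by_contra hj
    exact not_subsingleton _ (hB j (by omega) A)
  obtain ⟨A, _, _, _, hA⟩ : sSup S ∈ S := Nat.sSup_mem ⟨h, R, _, _, inferInstance, hh⟩ hS
  have := hT (sSup S) A
  obtain ⟨P, hP, N, _, _, ⟨e⟩, hN⟩ := T.exists_prime_of_mem_support (sSup S) A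
    (IsLocalRing.closedPoint_mem_support R (T.obj (sSup S) (.of R A)))
  obtain ⟨c, -, K, i1, i2, ⟨eK⟩, hK⟩ := exists_ltSeries_residue hT A P hP (sSup S) N e
    (Module.nonempty_support_iff.mp ⟨_, hN⟩)
  have hle : sSup S + c.length ≤ sSup S :=
    le_csSup hS ⟨K, i1, i2, Module.Finite.equiv eK.symm, hK⟩
  have hc : c.length = 0 := by omega
  rw [hc, add_zero] at hK
  refine ⟨sSup S, K, i1, i2, ⟨eK⟩, hK, fun j hj A _ _ _ => ?_⟩
  by_contra hA
  rw [not_subsingleton_iff_nontrivial] at hA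
  exact hj.not_ge (le_csSup hS ⟨A, _, _, ‹_›, hA⟩)

/-- If `T` is bounded and `h` is the top degree with `T h R ≠ 0`, then the depth `t` of `R` is finite
(it is `s - h`, with `s` the top degree of `T`), and `t` bounds the length of any regular sequence
plus the length of any chain of primes in the support of `T h R` that contain the sequence. -/
theorem exists_depth_eq (hT : T.IsFinite) (B : ℕ)
    (hB : ∀ j, B < j → ∀ (A : Type) [AddCommGroup A] [Module R A] [Module.Finite R A],
      Subsingleton (T.obj j (.of R A)))
    {h : ℕ} (hh : Nontrivial (T.obj h (.of R R)))
    (hmax : ∀ j, h < j → Subsingleton (T.obj j (.of R R))) :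
    ∃ t : ℕ, (∀ rs : List R, (∀ r ∈ rs, r ∈ IsLocalRing.maximalIdeal R) →
        RingTheory.Sequence.IsRegular R rs → rs.length ≤ t) ∧
      (∃ rs : List R, (∀ r ∈ rs, r ∈ IsLocalRing.maximalIdeal R) ∧
        RingTheory.Sequence.IsRegular R rs ∧ t ≤ rs.length) ∧
      ∀ (rs : List R) (X : Set (PrimeSpectrum R)) (c : LTSeries X),
        RingTheory.Sequence.IsRegular R rs → X ⊆ Module.support R (T.obj h (.of R R)) →
        (∀ P ∈ X, ∀ r ∈ rs, r ∈ P.asIdeal) → rs.length + c.length ≤ t := by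
  obtain ⟨s, K, _, _, ⟨eK⟩, hK, hs⟩ := exists_top hT B hB hh
  have key : ∀ (n : ℕ) (A : Type) [AddCommGroup A] [Module R A] [Module.Finite R A]
      (q : PrimeSpectrum R), q ∈ Module.support R (T.obj n (.of R A)) → n ≤ s := by
    intro n A _ _ _ q hq
    by_contra hn
    have := hs n (by omega) A
    simp [Module.support_eq_empty] at hq
  have hfin := hT h R
  refine ⟨s - h, fun rs hrs hreg => ?_, ?_, fun rs X c hreg hX hrs => ?_⟩
  · obtain ⟨N, _, _, _, hN⟩ := exists_mem_support_of_isRegular hT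
      (q := IsLocalRing.closedPoint R) rs hrs h R hreg
      (IsLocalRing.closedPoint_mem_support R (T.obj h (.of R R)))
    have := key _ _ _ hN
    omega
  · obtain ⟨rs, h1, h2, h3⟩ := exists_isRegular_of_vanishing eK hK hs h R hmax
    exact ⟨rs, h1, h2, by omega⟩
  · obtain ⟨N, _, _, _, hN⟩ := exists_mem_support_of_isRegular hT
      (q := c.head) rs (hrs _ c.head.2) h R hreg (hX c.head.2)
    obtain ⟨N', _, _, _, hN'⟩ := exists_mem_support_of_chain hT c hN
    have := key _ _ _ hN'
    omega

end Local

end DeltaFunctor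
/-! ### The δ-functor `Ext(-, N)` -/

section ExtFunctor

open Abelian

/-- The δ-functor `Ext^n(-, N)`, with `Ext` defined through the derived category. -/
noncomputable def extDelta (R : Type) [CommRing R] (N : ModuleCat.{0} R) : DeltaFunctor R where
  obj n A := ModuleCat.of R (Ext A N n)
  map n _ _ f := (Ext.mk₀ f).precompOfLinear R N (zero_add n)
  map_smul_id n A r := by
    ext x
    simp [Ext.mk₀_smul]
  exact_mid n S hS x := by
    constructor
    · intro hx
      exact Ext.contravariant_sequence_exact₂ hS N x hx
    · rintro ⟨y, rfl⟩
      change (Ext.mk₀ S.f).comp ((Ext.mk₀ S.g).comp y (zero_add n)) (zero_add n) = 0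
      simp
  exact_delta n S hS := by
    refine ⟨hS.extClass.precompOfLinear R N (add_comm 1 n), ?_, ?_⟩
    · intro x
      constructor
      · intro hx
        exact Ext.contravariant_sequence_exact₁ hS N x (add_comm 1 n) hx
      · rintro ⟨y, rfl⟩
        change hS.extClass.comp ((Ext.mk₀ S.f).comp y (zero_add n)) (add_comm 1 n) = 0
        simp
    · intro x
      constructor
      · intro hx
        exact Ext.contravariant_sequence_exact₃ hS N x hx (add_comm 1 n)
      · rintro ⟨y, rfl⟩
        change (Ext.mk₀ S.g).comp (hS.extClass.comp y (add_comm 1 n)) (zero_add _) = 0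
        simp

lemma extDelta_isFinite (R : Type) [CommRing R] [IsNoetherianRing R] (N : ModuleCat.{0} R)
    [Module.Finite R N] : (extDelta R N).IsFinite := by
  intro n A _ _ _
  have : Module.Finite R (Ext (ModuleCat.of R A) N n) := inferInstance
  exact this

end ExtFunctor
/-! ### Comparison of the two definitions of `Ext` -/

section Compare

/-- Vanishing of `Ext^n(X, Y)` in terms of cocycles on a projective resolution of `X`. In degree `0`
the predecessor of `0` for `ComplexShape.up ℕ` is `0` itself and the differential `d 0 0` is zero, so
the right-hand side says that every cocycle vanishes. -/
lemma subsingleton_ext_iff {R : Type} [CommRing R] {X : ModuleCat.{0} R}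
    (P : ProjectiveResolution X) (Y : ModuleCat.{0} R) (n : ℕ) :
    Subsingleton (Abelian.Ext X Y n) ↔ ∀ f : P.complex.X n ⟶ Y,
      P.complex.d (n + 1) n ≫ f = 0 →
      ∃ g : P.complex.X ((ComplexShape.up ℕ).prev n) ⟶ Y, P.complex.d n _ ≫ g = f := by
  cases n with
  | zero =>
    have h0 : P.complex.d 0 ((ComplexShape.up ℕ).prev 0) = 0 := P.complex.shape _ _ (by simp)
    obtain ⟨π, hπ, hw, hex⟩ : ∃ (π : P.complex.X 0 ⟶ X) (_ : Epi π)
        (w : P.complex.d 1 0 ≫ π = 0), (ShortComplex.mk _ _ w).Exact :=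
      ⟨P.π.f 0, inferInstanceAs (Epi (P.π.f 0)), P.complex_d_comp_π_f_zero, P.exact₀⟩
    have hπ' : Epi (ShortComplex.mk _ _ hw).g := hπ
    rw [Abelian.Ext.homEquiv₀.subsingleton_congr]
    constructor
    · intro h f hf
      have hdesc := hex.g_desc f hf
      rw [show hex.desc f hf = 0 from h.elim _ _, comp_zero] at hdesc
      exact ⟨0, by rw [← hdesc, comp_zero]⟩
    · intro h
      refine ⟨fun f g => ?_⟩
      have : ∀ f : X ⟶ Y, f = 0 := by
        intro f
        obtain ⟨g, hg⟩ := h (π ≫ f) (by rw [zero_add, reassoc_of% hw, zero_comp])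
        rw [h0, zero_comp] at hg
        rw [← cancel_epi π, ← hg, comp_zero]
      rw [this f, this g]
  | succ p =>
    rw [show (ComplexShape.up ℕ).prev (p + 1) = p from
      (ComplexShape.up ℕ).prev_eq' (by simp)]
    constructor
    · intro h f hf
      exact (P.extMk_eq_zero_iff f _ rfl hf p rfl).mp (Subsingleton.elim _ _)
    · intro h
      refine ⟨fun f g => ?_⟩
      have : ∀ f : Abelian.Ext X Y (p + 1), f = 0 := by
        intro f
        obtain ⟨f, hf, rfl⟩ := P.extMk_surjective f _ rfl
        exact (P.extMk_eq_zero_iff f _ rfl hf p rfl).mpr (h f hf)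
      rw [this f, this g]

/-- `Ext` as a left derived functor and `Ext` in the derived category vanish simultaneously. -/
lemma nontrivial_extMod_iff {R : Type} [CommRing R] (M N : Type) [AddCommGroup M] [Module R M]
    [AddCommGroup N] [Module R N] (n : ℕ) :
    Nontrivial (extMod R M N n) ↔
      Nontrivial (Abelian.Ext (ModuleCat.of R M) (ModuleCat.of R N) n) := by
  obtain ⟨P⟩ := HasProjectiveResolution.out (Z := ModuleCat.of R M)
  rw [← not_subsingleton_iff_nontrivial, ← not_subsingleton_iff_nontrivial, not_iff_not,
    subsingleton_ext_iff P]
  let e : extMod R M N n ≅ _ := P.isoExt n (ModuleCat.of R N)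
  rw [e.toLinearEquiv.subsingleton_congr, ← ModuleCat.isZero_iff_subsingleton,
    ← HomologicalComplex.exactAt_iff_isZero_homology,
    HomologicalComplex.exactAt_iff' _ _ n (n + 1) rfl (by simp),
    ShortComplex.moduleCat_exact_iff]
  rfl

end Compare
/-! ### The δ-functor of a complex of injectives -/

section HomComplex

variable {R : Type} [CommRing R]

/-- The complex `Hom(A, I)`. -/
noncomputable abbrev homComplex (I : ChainComplex (ModuleCat.{0} R) ℤ) (A : ModuleCat.{0} R) :
    ChainComplex (ModuleCat.{0} R) ℤ :=
  (((linearCoyoneda R (ModuleCat.{0} R)).obj (op A)).mapHomologicalComplex _).obj I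

/-- The chain map `Hom(B, I) ⟶ Hom(A, I)` given by precomposition with `f : A ⟶ B`. -/
noncomputable abbrev homComplexMap (I : ChainComplex (ModuleCat.{0} R) ℤ) {A B : ModuleCat.{0} R}
    (f : A ⟶ B) : homComplex I B ⟶ homComplex I A :=
  (NatTrans.mapHomologicalComplex ((linearCoyoneda R (ModuleCat.{0} R)).map f.op) _).app I

lemma homComplexMap_smul_id (I : ChainComplex (ModuleCat.{0} R) ℤ) (A : ModuleCat.{0} R) (r : R) :
    homComplexMap I (r • 𝟙 A) = r • 𝟙 (homComplex I A) := by
  ext j f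
  change A ⟶ I.X j at f
  exact (Linear.smul_comp _ _ _ r (𝟙 A) f).trans (congrArg (r • ·) (Category.id_comp f))

lemma homologyMap_smul_id (K : ChainComplex (ModuleCat.{0} R) ℤ) (r : R) (j : ℤ) :
    HomologicalComplex.homologyMap (r • 𝟙 K) j = r • 𝟙 (K.homology j) := by
  have h : HomologicalComplex.homologyMap (r • 𝟙 K) j =
      ShortComplex.homologyMap (r • 𝟙 (K.sc j)) := rfl
  rw [h, ShortComplex.homologyMap_smul, ShortComplex.homologyMap_id]
  rfl

lemma homComplex_w (I : ChainComplex (ModuleCat.{0} R) ℤ) (S : ShortComplex (ModuleCat.{0} R)) :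
    homComplexMap I S.g ≫ homComplexMap I S.f = 0 := by
  ext j f
  change S.X₃ ⟶ I.X j at f
  exact S.zero_assoc f |>.trans zero_comp

lemma homComplex_shortExact (I : ChainComplex (ModuleCat.{0} R) ℤ) [hI : ∀ j, Injective (I.X j)]
    {S : ShortComplex (ModuleCat.{0} R)} (hS : S.ShortExact) :
    (ShortComplex.mk _ _ (homComplex_w I S)).ShortExact := by
  have := hS.mono_f
  have := hS.epi_g
  refine HomologicalComplex.shortExact_of_degreewise_shortExact _ fun j => ?_
  refine ModuleCat.shortComplex_shortExact _ ?_ ?_ ?_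
  · intro f
    change S.X₂ ⟶ I.X j at f
    constructor
    · intro hf
      exact ⟨hS.exact.desc f hf, hS.exact.g_desc f hf⟩
    · rintro ⟨g, rfl⟩
      change S.X₃ ⟶ I.X j at g
      exact (S.zero_assoc g).trans zero_comp
  · intro f g hfg
    exact (cancel_epi S.g).mp hfg
  · intro f
    exact ⟨Injective.factorThru f S.f, Injective.comp_factorThru f S.f⟩

/-- The δ-functor `A ↦ H_{c - n}(Hom(A, I))` of a complex of injectives `I`. The shift by `c`
turns homological degrees below `c` into degrees in `ℕ`; degrees above `c` are discarded. -/
noncomputable def homDelta (I : ChainComplex (ModuleCat.{0} R) ℤ) [hI : ∀ j, Injective (I.X j)]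
    (c : ℤ) : DeltaFunctor R where
  obj n A := (homComplex I A).homology (c - n)
  map n _ _ f := (HomologicalComplex.homologyMap (homComplexMap I f) (c - n)).hom
  map_smul_id n A r := by
    rw [homComplexMap_smul_id, homologyMap_smul_id]
    rfl
  exact_mid n S hS :=
    (ShortComplex.ShortExact.moduleCat_exact_iff_function_exact _).mp
      ((homComplex_shortExact I hS).homology_exact₂ (c - n))
  exact_delta n S hS := by
    have hrel : (ComplexShape.down ℤ).Rel (c - n) (c - (n + 1 : ℕ)) := by
      simp only [ComplexShape.down_Rel]
      push_cast
      ring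
    exact ⟨((homComplex_shortExact I hS).δ _ _ hrel).hom,
      (ShortComplex.ShortExact.moduleCat_exact_iff_function_exact _).mp
        ((homComplex_shortExact I hS).homology_exact₃ _ _ hrel),
      (ShortComplex.ShortExact.moduleCat_exact_iff_function_exact _).mp
        ((homComplex_shortExact I hS).homology_exact₁ _ _ hrel)⟩

lemma homDelta_subsingleton (I : ChainComplex (ModuleCat.{0} R) ℤ) [hI : ∀ j, Injective (I.X j)]
    (c : ℤ) (n : ℕ) (h : IsZero (I.X (c - n))) (A : ModuleCat.{0} R) :
    Subsingleton ((homDelta I c).obj n A) := by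
  rw [← ModuleCat.isZero_iff_subsingleton]
  refine ShortComplex.isZero_homology_of_isZero_X₂ _ ?_
  exact ((linearCoyoneda R (ModuleCat.{0} R)).obj (op A)).map_isZero h

/-- The natural isomorphism `Hom(R, -) ≅ id`. -/
noncomputable def coyonedaRingIso :
    (linearCoyoneda R (ModuleCat.{0} R)).obj (op (ModuleCat.of R R)) ≅ 𝟭 (ModuleCat.{0} R) :=
  NatIso.ofComponents
    (fun X => (ModuleCat.homLinearEquiv.trans (LinearMap.ringLmapEquivSelf R R X)).toModuleIso)
    (fun f => by ext x; rfl)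

lemma homDelta_ring (I : ChainComplex (ModuleCat.{0} R) ℤ) [hI : ∀ j, Injective (I.X j)]
    (c : ℤ) (n : ℕ) :
    Nonempty ((homDelta I c).obj n (.of R R) ≅ I.homology (c - n)) :=
  ⟨(HomologicalComplex.homologyFunctor _ _ (c - n)).mapIso
    ((NatIso.mapHomologicalComplex coyonedaRingIso _).app I ≪≫
      (Functor.mapHomologicalComplexIdIso _ _).app I)⟩

end HomComplex
/-! ### Depth, grade and dimension -/

section Main

variable {R : Type} [CommRing R] [IsNoetherianRing R]

/-- A bounded quasi-injective resolution of `M` yields a bounded finite δ-functor whose top nonzero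
value at `R` is a finite direct sum of copies of `M`; only the inclusion of supports that this
implies is recorded. -/
lemma exists_deltaFunctor {M : Type} [AddCommGroup M] [Module R M]
    [Module.Finite R M] [Nontrivial M] (hqid : qid R M ≠ ⊤) :
    ∃ T : DeltaFunctor R, T.IsFinite ∧
      (∃ B : ℕ, ∀ j, B < j → ∀ (A : Type) [AddCommGroup A] [Module R A] [Module.Finite R A],
        Subsingleton (T.obj j (.of R A))) ∧
      ∃ h : ℕ, Nontrivial (T.obj h (.of R R)) ∧
        (∀ j, h < j → Subsingleton (T.obj j (.of R R))) ∧
        Module.support R M ⊆ Module.support R (T.obj h (.of R R)) := by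
  obtain ⟨_, n, rfl, I, ⟨hinj, ⟨u, hu⟩, b, ⟨i₀, hi₀⟩, hb⟩, k, -, hk⟩ :
      {c : ℕ∞ | ∃ n : ℕ, c = n ∧ ∃ I : ChainComplex (ModuleCat.{0} R) ℤ,
        IsQuasiInjRes R I M ∧
        ∃ h : ℤ, ¬ IsZero (I.homology h) ∧ ∀ i, i < h - n → IsZero (I.X i)}.Nonempty := by
    rw [Set.nonempty_iff_ne_empty]
    intro h
    exact hqid (by rw [qid, h, sInf_empty])
  -- The shift by `u + 1`, one more than needed, makes `T 0 = 0`, which gives finite generation.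
  let T := homDelta I (u + 1)
  let e (j : ℕ) : T.obj j (.of R R) ≃ₗ[R] (Fin (b (u + 1 - j)) → M) :=
    ((homDelta_ring I (u + 1) j).some ≪≫ (hb (u + 1 - j)).some).toLinearEquiv
  have hB : ∀ j : ℕ, (u + 1 - (k - n)).toNat < j → ∀ A, Subsingleton (T.obj j A) := fun j hj A =>
    homDelta_subsingleton I (u + 1) j (hk _ (by omega)) A
  have hnt : ∃ j : ℕ, Nontrivial (T.obj j (.of R R)) := by
    have : i₀ ≤ u := by
      by_contra hi
      have h1 : IsZero (I.homology i₀) :=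
        ShortComplex.isZero_homology_of_isZero_X₂ _ (hu i₀ (by omega))
      have h2 := ModuleCat.subsingleton_of_isZero (h1.of_iso (hb i₀).some.symm)
      have : Nonempty (Fin (b i₀)) := ⟨⟨0, hi₀⟩⟩
      exact not_subsingleton (Fin (b i₀) → M) h2
    obtain ⟨j, rfl⟩ : ∃ j : ℕ, i₀ = u + 1 - j := ⟨(u + 1 - i₀).toNat, by omega⟩
    have : Nonempty (Fin (b (u + 1 - j))) := ⟨⟨0, hi₀⟩⟩
    exact ⟨j, (e j).toEquiv.nontrivial⟩
  have hbdd : BddAbove {j : ℕ | Nontrivial (T.obj j (.of R R))} := by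
    refine ⟨(u + 1 - (k - n)).toNat, fun j hj => ?_⟩
    by_contra hlt
    exact @not_subsingleton _ hj (hB j (not_le.mp hlt) _)
  obtain ⟨h, hh, hmax⟩ : ∃ h : ℕ, Nontrivial (T.obj h (.of R R)) ∧
      ∀ j, h < j → Subsingleton (T.obj j (.of R R)) := by
    refine ⟨_, Nat.sSup_mem hnt hbdd, fun j hj => ?_⟩
    by_contra hA
    rw [not_subsingleton_iff_nontrivial] at hA
    exact hj.not_ge (le_csSup hbdd hA)
  refine ⟨T, T.finite_of_ring (fun A => homDelta_subsingleton I (u + 1) 0 (hu _ (by simp)) A)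
    (fun j => Module.Finite.equiv (e j).symm), ⟨_, fun j hj A _ _ _ => hB j hj _⟩, h, hh, hmax, ?_⟩
  rw [(e h).support_eq]
  have : Nontrivial (Fin (b (u + 1 - h)) → M) := (e h).symm.toEquiv.nontrivial
  obtain ⟨i⟩ : Nonempty (Fin (b (u + 1 - h))) := by
    by_contra hemp
    rw [not_nonempty_iff] at hemp
    exact not_subsingleton (Fin (b (u + 1 - h)) → M) inferInstance
  exact Module.support_subset_of_surjective (LinearMap.proj (R := R) (φ := fun _ => M) i)
    (LinearMap.proj_surjective i)

/-- The inequality `grade M ≤ depth (ann M, R)`, from Rees's theorem. -/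
lemma exists_isRegular_annihilator {M : Type} [AddCommGroup M] [Module R M]
    [Module.Finite R M] [Nontrivial M] {n : ℕ}
    (hn : ∀ i < n, ¬ Nontrivial (extMod R M R i)) :
    ∃ rs : List R, rs.length = n ∧ (∀ r ∈ rs, r ∈ Module.annihilator R M) ∧
      RingTheory.Sequence.IsRegular R rs := by
  refine ModuleCat.exists_isRegular_of_exists_subsingleton_ext (Module.annihilator R M) n
    (ModuleCat.of R R) ?_ (ModuleCat.of R M) ?_ fun i hi => ?_
  · rw [lt_top_iff_ne_top]
    intro h
    have h1 : Module.annihilator R M = ⊤ := by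
      rw [eq_top_iff]
      refine h.symm.le.trans (Submodule.smul_le.mpr fun r hr s _ => ?_)
      exact Ideal.mul_mem_right _ _ hr
    exact not_subsingleton M (Module.annihilator_eq_top_iff.mp h1)
  · exact Module.support_eq_zeroLocus
  · have := hn i hi
    rwa [nontrivial_extMod_iff, not_nontrivial_iff_subsingleton] at this

variable [IsLocalRing R]

/-- The inequality `depth R ≤ i + dim M` whenever `Ext^i(M, R) ≠ 0`: climbing along a chain in
the support of `M` gives `Ext^{i+d}(R/m, R) ≠ 0` with `d` the length of the chain, and `depth R` is at
most the degree of any nonzero `Ext(R/m, R)`. -/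
lemma exists_ltSeries_of_nontrivial_extMod {M : Type} [AddCommGroup M] [Module R M]
    [Module.Finite R M] {i : ℕ} (hi : Nontrivial (extMod R M R i)) {rs : List R}
    (hrs : ∀ r ∈ rs, r ∈ IsLocalRing.maximalIdeal R) (hreg : RingTheory.Sequence.IsRegular R rs) :
    ∃ c : LTSeries (Module.support R M), rs.length ≤ i + c.length := by
  rw [nontrivial_extMod_iff] at hi
  have hT := extDelta_isFinite R (ModuleCat.of R R)
  have hi' : Nontrivial ((extDelta R (ModuleCat.of R R)).obj i (.of R M)) := hi
  have := hT i M
  obtain ⟨P, hP, N, _, _, ⟨e⟩, hN⟩ := DeltaFunctor.exists_prime_of_mem_support _ i M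
    (IsLocalRing.closedPoint_mem_support R ((extDelta R (ModuleCat.of R R)).obj i (.of R M)))
  obtain ⟨c, -, K, _, _, ⟨eK⟩, hK⟩ := DeltaFunctor.exists_ltSeries_residue hT M P hP i N e
    (Module.nonempty_support_iff.mp ⟨_, hN⟩)
  refine ⟨c, ?_⟩
  by_contra hlt
  have : Module.Finite R K := Module.Finite.equiv eK.symm
  have hsub := ModuleCat.subsingleton_ext_of_exists_isRegular (IsLocalRing.maximalIdeal R)
    (ModuleCat.of R K) (by
      change Module.support R K ⊆ _
      rw [eK.support_eq, Module.support_eq_zeroLocus, Ideal.annihilator_quotient])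
    (ModuleCat.of R R) (by
      rw [lt_top_iff_ne_top]
      intro h
      refine (IsLocalRing.maximalIdeal.isMaximal R).ne_top (eq_top_iff.mpr ?_)
      refine h.symm.le.trans (Submodule.smul_le.mpr fun r hr s _ => ?_)
      exact Ideal.mul_mem_right _ _ hr) rs hrs hreg (i + c.length) (not_le.mp hlt)
  exact @not_subsingleton _ hK hsub

end Main

/-- If `M` is a nonzero finitely generated module with `qid_R M < ∞` over a Noetherian
local ring, then `dim M = depth R - grade M`. -/
theorem stmt17 (R : Type) [CommRing R] [IsNoetherianRing R] [IsLocalRing R]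
    (M : Type) [AddCommGroup M] [Module R M] [Module.Finite R M] (hM : Nontrivial M)
    (hqid : qid R M ≠ ⊤) :
    moduleDim R M = moduleDepth R R - extGrade R M R := by
  obtain ⟨T, hT, ⟨B, hB⟩, h, hh, hmax, hsupp⟩ := exists_deltaFunctor hqid
  obtain ⟨t, h1, ⟨rs, hrs, hreg, ht⟩, h3⟩ := T.exists_depth_eq hT B hB hh hmax
  have hdepth : moduleDepth R R = t := by
    refine le_antisymm (iSup_le fun l => by exact_mod_cast h1 l.1 l.2.1 l.2.2) ?_
    exact le_trans (by exact_mod_cast ht) (le_iSup (fun rs : {l : List R //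
      (∀ r ∈ l, r ∈ IsLocalRing.maximalIdeal R) ∧ RingTheory.Sequence.IsRegular R l} =>
      (rs.1.length : ℕ∞)) ⟨rs, hrs, hreg⟩)
  -- `grade M + dim M ≤ depth R`, stated for `n` below the grade so that finiteness of the grade
  -- follows as well.
  have hA : ∀ n : ℕ, (∀ i < n, ¬ Nontrivial (extMod R M R i)) →
      ∀ c : LTSeries (Module.support R M), n + c.length ≤ t := by
    intro n hn c
    obtain ⟨l, rfl, hl, hlreg⟩ := exists_isRegular_annihilator hn
    exact h3 l _ c hlreg hsupp fun P hP r hr =>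
      Module.annihilator_le_of_mem_support hP (hl r hr)
  have hex : ∃ i, Nontrivial (extMod R M R i) := by
    by_contra! hcon
    obtain ⟨p, hp⟩ := Module.nonempty_support_of_nontrivial (R := R) (M := M)
    have := hA (t + 1) (fun i _ => not_nontrivial_iff_subsingleton.mpr (hcon i))
      (RelSeries.singleton _ ⟨p, hp⟩)
    omega
  classical
  obtain ⟨g, hg, hgmin⟩ : ∃ g, Nontrivial (extMod R M R g) ∧
      ∀ i < g, ¬ Nontrivial (extMod R M R i) :=
    ⟨Nat.find hex, Nat.find_spec hex, fun i => Nat.find_min hex⟩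
  have hgrade : extGrade R M R = g := by
    refine le_antisymm (sInf_le ⟨g, rfl, hg⟩) (le_sInf ?_)
    rintro _ ⟨i, rfl, hi⟩
    by_contra hlt
    exact hgmin i (by exact_mod_cast not_le.mp hlt) hi
  rw [hdepth, hgrade, ← ENat.natCast_sub]
  refine le_antisymm (iSup_le fun c => ?_) ?_
  · have := hA g hgmin c
    exact_mod_cast (by omega : c.length ≤ t - g)
  · obtain ⟨c, hc⟩ := exists_ltSeries_of_nontrivial_extMod hg hrs hreg
    exact le_trans (by exact_mod_cast (by omega : t - g ≤ c.length))
      (le_iSup (fun c : LTSeries (Module.support R M) => (c.length : ℕ∞)) c)
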